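/- Let ε > 0, L > 0, set ℓ₁ = 152, λ = (ℓ₁/L)√(2ε), and fix an integer T ≥ 1. Define the rescaled chain function f : ℝ^T → ℝ by f(x) = (Lλ²/ℓ₁)·F_T(x/λ), so that ∇f(x) = (Lλ/ℓ₁)·∇F_T(x/λ). Then for every x ∈ ℝ^T with prog_0(x) < T, one has ‖∇f(x)‖² > 2ε (Euclidean norm); i.e., no point whose progress is below T is a 2ε-approximate stationary point of f. -/

import Mathlib

open MeasureTheory

/-- The scalar function `Ψ` of the hard-instance construction. -/
noncomputable def Psi (t : ℝ) : ℝ :=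
  if t ≤ 1 / 2 then 0 else Real.exp (1 - 1 / (2 * t - 1) ^ 2)

/-- The scalar function `Φ(t) = √e ∫_{−∞}^t e^{−τ²/2} dτ` of the hard-instance
construction. -/
noncomputable def Phi (t : ℝ) : ℝ :=
  Real.sqrt (Real.exp 1) * ∫ τ in Set.Iic t, Real.exp (-τ ^ 2 / 2)

/-- The hard-instance chain function `F_T` on `ℝ^{T+1}` (so the paper's dimension `T ≥ 1`
is `T + 1` here; the paper's coordinate `xᵢ`, `1 ≤ i ≤ T`, is the zero-based coordinate
`x (i−1)`). -/
noncomputable def chainF (T : ℕ) (x : EuclideanSpace ℝ (Fin (T + 1))) : ℝ :=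
  -Psi 1 * Phi (x 0) +
    ∑ i : Fin T,
      (Psi (-(x i.castSucc)) * Phi (-(x i.succ)) - Psi (x i.castSucc) * Phi (x i.succ))

/-- `prog α x` is the largest one-based index `i ∈ {0, 1, …, n}` such that `|xᵢ| > α`
(with the paper's convention `x₀ ≡ 1`, so the value `0` is allowed and returned when no
coordinate exceeds `α`). -/
noncomputable def prog {n : ℕ} (α : ℝ) (x : EuclideanSpace ℝ (Fin n)) : ℕ :=
  (Finset.univ.filter fun i : Fin n => α < |x i|).sup fun i => (i : ℕ) + 1

/-!
With `x₀ = 1`, the function `F_T` is the sum of the links `Ψ(-xᵢ₋₁)Φ(-xᵢ) - Ψ(xᵢ₋₁)Φ(xᵢ)`, each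
antitone in both variables. If `|x_T| < 1`, then some `j` has `|xⱼ₋₁| ≥ 1 > |xⱼ|`. There the `j`-th
link alone has slope `-(Ψ(xⱼ₋₁) + Ψ(-xⱼ₋₁)) exp((1 - xⱼ²)/2) < -1` in `xⱼ`, and the other links
only lower `∂ⱼF_T` further, so `‖∇F_T(x)‖ > 1`. Rescaling multiplies the gradient at `x/λ` by
`Lλ/ℓ₁ = √(2ε)`.
-/

lemma exists_castSucc_and_not_succ {n : ℕ} {p : Fin (n + 1) → Prop} (h_zero : p 0)
    (h_last : ¬p (Fin.last n)) : ∃ i : Fin n, p i.castSucc ∧ ¬p i.succ := by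
  by_contra! h
  exact h_last (Fin.induction (motive := p) h_zero h (Fin.last n))

lemma gradient_const_mul_comp_smul {F : Type*} [NormedAddCommGroup F] [InnerProductSpace ℝ F]
    [CompleteSpace F] (g : F → ℝ) (c k : ℝ) (x : F) :
    gradient (fun y => c * g (k • y)) x = (c * k) • gradient g (k • x) := by
  have hfderiv : fderiv ℝ (fun y => c * g (k • y)) x = (c * k) • fderiv ℝ g (k • x) := by
    rw [mul_smul, ← fderiv_comp_smul]
    exact congrFun (fderiv_const_smul_field c) x
  simp only [gradient, hfderiv, map_smulₛₗ, conj_trivial]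

lemma abs_le_of_prog_le {n : ℕ} {α : ℝ} {x : EuclideanSpace ℝ (Fin n)} {i : Fin n}
    (h : prog α x ≤ i) : |x i| ≤ α := by
  by_contra! hi
  have : (i : ℕ) + 1 ≤ prog α x :=
    Finset.le_sup (f := fun k : Fin n => (k : ℕ) + 1) (by simpa using hi)
  lia

lemma Psi_of_le_half {t : ℝ} (ht : t ≤ 1 / 2) : Psi t = 0 := if_pos ht

lemma Psi_of_half_lt {t : ℝ} (ht : 1 / 2 < t) :
    Psi t = Real.exp (1 - 1 / (2 * t - 1) ^ 2) := if_neg ht.not_ge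

lemma Psi_one : Psi 1 = 1 := by
  rw [Psi_of_half_lt (by norm_num)]
  norm_num

lemma Psi_nonneg (t : ℝ) : 0 ≤ Psi t := by
  rcases le_or_gt t (1 / 2) with ht | ht
  · rw [Psi_of_le_half ht]
  · rw [Psi_of_half_lt ht]
    positivity

lemma monotone_Psi : Monotone Psi := by
  intro s t hst
  rcases le_or_gt s (1 / 2) with hs | hs
  · rw [Psi_of_le_half hs]
    exact Psi_nonneg t
  · rw [Psi_of_half_lt hs, Psi_of_half_lt (hs.trans_le hst)]
    have : 0 < 2 * s - 1 := by linarith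
    gcongr

lemma one_le_Psi_add_Psi_neg {a : ℝ} (ha : 1 ≤ |a|) : 1 ≤ Psi a + Psi (-a) := by
  rcases le_abs.mp ha with h | h
  · linarith [monotone_Psi h, Psi_one, Psi_nonneg (-a)]
  · linarith [monotone_Psi h, Psi_one, Psi_nonneg a]

lemma Psi_le_exp_one_mul_sq (t : ℝ) : Psi t ≤ Real.exp 1 * (2 * t - 1) ^ 2 := by
  rcases le_or_gt t (1 / 2) with ht | ht
  · rw [Psi_of_le_half ht]
    positivity
  · have hpos : 0 < (2 * t - 1) ^ 2 := pow_pos (by linarith) 2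
    rw [Psi_of_half_lt ht, sub_eq_add_neg, Real.exp_add, Real.exp_neg, one_div]
    gcongr
    rw [inv_le_comm₀ (Real.exp_pos _) hpos]
    linarith [Real.add_one_le_exp ((2 * t - 1) ^ 2)⁻¹]

lemma differentiableAt_Psi_half : DifferentiableAt ℝ Psi (1 / 2) := by
  have hO : Psi =O[nhds (1 / 2)] fun t => ‖t - 1 / 2‖ ^ 2 := by
    refine .of_bound (4 * Real.exp 1) (.of_forall fun t => ?_)
    rw [Real.norm_of_nonneg (Psi_nonneg t), norm_pow, norm_norm, Real.norm_eq_abs, sq_abs]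
    linarith [Psi_le_exp_one_mul_sq t]
  exact (hO.hasFDerivAt one_lt_two).differentiableAt

lemma differentiable_Psi : Differentiable ℝ Psi := by
  intro t
  rcases lt_trichotomy t (1 / 2) with ht | rfl | ht
  · have hPsi : Psi =ᶠ[nhds t] fun _ => 0 := by
      filter_upwards [Iio_mem_nhds ht] with s hs using Psi_of_le_half hs.le
    exact (differentiableAt_const 0).congr_of_eventuallyEq hPsi
  · exact differentiableAt_Psi_half
  · have hPsi : Psi =ᶠ[nhds t] fun s => Real.exp (1 - 1 / (2 * s - 1) ^ 2) := by
      filter_upwards [Ioi_mem_nhds ht] with s hs using Psi_of_half_lt hs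
    have hne : (2 * t - 1) ^ 2 ≠ 0 := (pow_pos (by linarith) 2).ne'
    refine DifferentiableAt.congr_of_eventuallyEq ?_ hPsi
    fun_prop (disch := assumption)

lemma Phi_nonneg (t : ℝ) : 0 ≤ Phi t :=
  mul_nonneg (Real.sqrt_nonneg _) (integral_nonneg fun _ => (Real.exp_pos _).le)

lemma integrable_exp_neg_sq_div_two : Integrable fun τ : ℝ => Real.exp (-τ ^ 2 / 2) := by
  convert integrable_exp_neg_mul_sq (b := 1 / 2) (by norm_num) using 3
  ring

lemma hasDerivAt_Phi (t : ℝ) : HasDerivAt Phi (Real.exp ((1 - t ^ 2) / 2)) t := by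
  have hcont : Continuous fun τ : ℝ => Real.exp (-τ ^ 2 / 2) := by fun_prop
  have hPhi : Phi = fun s => Real.sqrt (Real.exp 1) *
      ((∫ τ in Set.Iic 0, Real.exp (-τ ^ 2 / 2)) + ∫ τ in (0 : ℝ)..s, Real.exp (-τ ^ 2 / 2)) := by
    ext s
    rw [← intervalIntegral.integral_Iic_sub_Iic integrable_exp_neg_sq_div_two.integrableOn
      integrable_exp_neg_sq_div_two.integrableOn, add_sub_cancel, Phi]
  have hderiv : Real.sqrt (Real.exp 1) * Real.exp (-t ^ 2 / 2) = Real.exp ((1 - t ^ 2) / 2) := by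
    rw [← Real.exp_half, ← Real.exp_add]
    ring_nf
  rw [hPhi, ← hderiv]
  exact ((hcont.integral_hasStrictDerivAt 0 t).hasDerivAt.const_add _).const_mul _

lemma differentiable_Phi : Differentiable ℝ Phi := fun t => (hasDerivAt_Phi t).differentiableAt

lemma monotone_Phi : Monotone Phi :=
  monotone_of_hasDerivAt_nonneg hasDerivAt_Phi fun _ => (Real.exp_pos _).le

/-- The summand of `chainF` that couples two consecutive coordinates `a = xᵢ₋₁` and `b = xᵢ`. -/
noncomputable def chainLink (a b : ℝ) : ℝ :=
  Psi (-a) * Phi (-b) - Psi a * Phi b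

lemma chainLink_le_chainLink {a a' b b' : ℝ} (ha : a ≤ a') (hb : b ≤ b') :
    chainLink a' b' ≤ chainLink a b :=
  sub_le_sub
    (mul_le_mul (monotone_Psi (neg_le_neg ha)) (monotone_Phi (neg_le_neg hb)) (Phi_nonneg _)
      (Psi_nonneg _))
    (mul_le_mul (monotone_Psi ha) (monotone_Phi hb) (Phi_nonneg _) (Psi_nonneg _))

lemma hasDerivAt_chainLink_right (a b : ℝ) :
    HasDerivAt (chainLink a) (-((Psi a + Psi (-a)) * Real.exp ((1 - b ^ 2) / 2))) b := by
  have hneg : HasDerivAt (fun s => Phi (-s)) (-Real.exp ((1 - b ^ 2) / 2)) b := by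
    simpa [Function.comp_def] using (hasDerivAt_Phi (-b)).comp b (hasDerivAt_neg b)
  refine ((hneg.const_mul (Psi (-a))).sub ((hasDerivAt_Phi b).const_mul (Psi a))).congr_deriv ?_
  ring

lemma one_lt_Psi_add_Psi_neg_mul_exp {a b : ℝ} (ha : 1 ≤ |a|) (hb : |b| < 1) :
    1 < (Psi a + Psi (-a)) * Real.exp ((1 - b ^ 2) / 2) := by
  have hexp : 1 < Real.exp ((1 - b ^ 2) / 2) :=
    Real.one_lt_exp_iff.mpr (by linarith [(sq_lt_one_iff_abs_lt_one b).mpr hb])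
  exact hexp.trans_le (le_mul_of_one_le_left (Real.exp_pos _).le (one_le_Psi_add_Psi_neg ha))

/-- The paper's one-based coordinates `x₀, x₁, …, x_n`, with the convention `x₀ ≡ 1`. -/
noncomputable def chainCoord {n : ℕ} (x : EuclideanSpace ℝ (Fin n)) : Fin (n + 1) → ℝ :=
  Fin.cons 1 x

@[simp]
lemma chainCoord_zero {n : ℕ} (x : EuclideanSpace ℝ (Fin n)) : chainCoord x 0 = 1 := rfl

@[simp]
lemma chainCoord_succ {n : ℕ} (x : EuclideanSpace ℝ (Fin n)) (i : Fin n) :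
    chainCoord x i.succ = x i := rfl

lemma chainCoord_add_smul_single {n : ℕ} (x : EuclideanSpace ℝ (Fin n)) (j : Fin n) (t : ℝ) :
    chainCoord (x + t • EuclideanSpace.single j 1) =
      Function.update (chainCoord x) j.succ (x j + t) := by
  ext i
  cases i using Fin.cases with
  | zero => simp [Function.update_of_ne (Fin.succ_ne_zero j).symm]
  | succ i => rcases eq_or_ne i j with rfl | hij <;> simp [*]

section Chain

variable {T : ℕ} (x : EuclideanSpace ℝ (Fin (T + 1)))

-- Since `Ψ(-1) = 0`, the leading term `-Ψ(1)Φ(x₁)` is the link from `x₀ = 1` to `x₁`.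
lemma chainF_eq_sum_chainLink :
    chainF T x = ∑ i : Fin (T + 1), chainLink (chainCoord x i.castSucc) (chainCoord x i.succ) := by
  have hPsi : Psi (-1) = 0 := Psi_of_le_half (by norm_num)
  have hfirst : chainLink 1 (x 0) = -Psi 1 * Phi (x 0) := by simp [chainLink, hPsi]
  rw [Fin.sum_univ_succ, Fin.castSucc_zero, chainCoord_zero, chainCoord_succ, hfirst]
  rfl

lemma differentiable_chainF : Differentiable ℝ (chainF T) := by
  have hPsi := differentiable_Psi
  have hPhi := differentiable_Phi
  unfold chainF
  fun_prop

lemma antitone_chainF_sub_chainLink (j : Fin (T + 1)) :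
    Antitone fun t : ℝ => chainF T (x + t • EuclideanSpace.single j 1) -
      chainLink (chainCoord x j.castSucc) (x j + t) := by
  intro s t hst
  simp only [chainF_eq_sum_chainLink, chainCoord_add_smul_single,
    ← Finset.add_sum_erase _ _ (Finset.mem_univ j), Function.update_self,
    Function.update_of_ne j.castSucc_lt_succ.ne, add_sub_cancel_left]
  have hcoord := Function.update_mono (f := chainCoord x) (i := j.succ)
    (add_le_add_right hst (x j))
  exact Finset.sum_le_sum fun i _ => chainLink_le_chainLink (hcoord _) (hcoord _)

lemma gradient_chainF_apply_le (j : Fin (T + 1)) :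
    gradient (chainF T) x j ≤ -((Psi (chainCoord x j.castSucc) + Psi (-chainCoord x j.castSucc)) *
      Real.exp ((1 - x j ^ 2) / 2)) := by
  have hchain : HasDerivAt (fun t : ℝ => chainF T (x + t • EuclideanSpace.single j 1))
      (gradient (chainF T) x j) 0 := by
    have := (differentiable_chainF x).hasFDerivAt.hasLineDerivAt (EuclideanSpace.single j 1)
    rwa [← inner_gradient_left, EuclideanSpace.inner_single_right, one_mul, conj_trivial] at this
  have hlink : HasDerivAt (fun t => chainLink (chainCoord x j.castSucc) (x j + t)) _ 0 :=
    HasDerivAt.comp_const_add (x j) 0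
      (by simpa using hasDerivAt_chainLink_right (chainCoord x j.castSucc) (x j))
  have hanti := (antitone_chainF_sub_chainLink x j).deriv_nonpos (x := 0)
  rw [(hchain.fun_sub hlink).deriv] at hanti
  exact sub_nonpos.mp hanti

variable {x} in
lemma one_lt_norm_gradient_chainF (hx : |x (Fin.last T)| < 1) : 1 < ‖gradient (chainF T) x‖ := by
  obtain ⟨j, hprev, hj⟩ := exists_castSucc_and_not_succ (p := fun i => 1 ≤ |chainCoord x i|)
    (by simp) (by simpa [← Fin.succ_last] using hx)
  calc 1 < (Psi (chainCoord x j.castSucc) + Psi (-chainCoord x j.castSucc)) *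
          Real.exp ((1 - x j ^ 2) / 2) := one_lt_Psi_add_Psi_neg_mul_exp hprev (not_le.mp hj)
    _ ≤ -gradient (chainF T) x j := le_neg_of_le_neg (gradient_chainF_apply_le x j)
    _ ≤ ‖gradient (chainF T) x j‖ := neg_le_abs _
    _ ≤ ‖gradient (chainF T) x‖ := PiLp.norm_apply_le _ j

end Chain

theorem rescaled_chain_large_gradient_general
    (L ε : ℝ) (hL : 0 < L) (hε : 0 < ε) (T : ℕ)
    (lam : ℝ) (hlam : lam = 152 / L * Real.sqrt (2 * ε))
    (f : EuclideanSpace ℝ (Fin (T + 1)) → ℝ)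
    (hf : ∀ x, f x = L * lam ^ 2 / 152 * chainF T (lam⁻¹ • x))
    (α : ℝ) (hα : α < lam) :
    ∀ x : EuclideanSpace ℝ (Fin (T + 1)),
      prog α x < T + 1 → 2 * ε < ‖gradient f x‖ ^ 2 := by
  intro x hx
  have hlam_pos : 0 < lam := by rw [hlam]; positivity
  have hlast : |(lam⁻¹ • x) (Fin.last T)| < 1 := by
    have : |x (Fin.last T)| < lam := (abs_le_of_prog_le (Nat.lt_succ_iff.mp hx)).trans_lt hα
    rwa [PiLp.smul_apply, smul_eq_mul, abs_mul, abs_of_pos (inv_pos.mpr hlam_pos),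
      inv_mul_lt_one₀ hlam_pos]
  have hscale : L * lam ^ 2 / 152 * lam⁻¹ = Real.sqrt (2 * ε) := by
    rw [hlam]
    field_simp
  rw [funext hf, gradient_const_mul_comp_smul, hscale, norm_smul, mul_pow, Real.norm_eq_abs,
    sq_abs, Real.sq_sqrt (by positivity)]
  exact lt_mul_of_one_lt_right (by positivity)
    (one_lt_pow₀ (one_lt_norm_gradient_chainF hlast) two_ne_zero)

/-- Rescaled chain function: with `ℓ₁ = 152`,
`λ = (ℓ₁/L)√(2ε)` and `f(x) = (Lλ²/ℓ₁)·F_T(x/λ)`, every point `x` whose progress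
`prog_0(x)` is below the dimension satisfies `‖∇f(x)‖² > 2ε`; i.e. no such point is a
`2ε`-approximate stationary point of `f`.  (Stated for dimension `T + 1`, i.e. for
every paper dimension `T ≥ 1`.) -/
theorem rescaled_chain_large_gradient
    (L ε : ℝ) (hL : 0 < L) (hε : 0 < ε) (T : ℕ)
    (lam : ℝ) (hlam : lam = 152 / L * Real.sqrt (2 * ε))
    (f : EuclideanSpace ℝ (Fin (T + 1)) → ℝ)
    (hf : ∀ x, f x = L * lam ^ 2 / 152 * chainF T (lam⁻¹ • x)) :
    ∀ x : EuclideanSpace ℝ (Fin (T + 1)),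
      prog 0 x < T + 1 → 2 * ε < ‖gradient f x‖ ^ 2 := by
  exact rescaled_chain_large_gradient_general L ε hL hε T lam hlam f hf 0 (by rw [hlam]; positivity)
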